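/- Let U be a consistent, effectively ef-essentially incomplete c.e. theory. Then there is a c.e. set 𝒳 of sentences such that U is effectively ef-essentially 𝒳-incomplete and every φ ∈ 𝒳 is consistent with U (in other words, U_p ∪ 𝒳 is mono-consistent). -/

import Mathlib

open FirstOrder FirstOrder.Language

namespace PourEl

/-! ## Recursion-theoretic notions -/

/-- The `i`-th computably enumerable subset of `ℕ` (the domain of the `i`-th
partial computable function). -/
def WSet (i : ℕ) : Set ℕ :=
  {n | ((Denumerable.ofNat Nat.Partrec.Code i).eval n).Dom}

/-- A set of natural numbers is computably enumerable. -/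
def CE (A : Set ℕ) : Prop := ∃ i, A = WSet i

/-- A set of natural numbers is computable. -/
def Comp (A : Set ℕ) : Prop := ComputablePred (· ∈ A)

/-- Disjoint sets `X`, `Y` are computably separable iff some computable set
contains `X` and is disjoint from `Y`. -/
def CompSeparable (X Y : Set ℕ) : Prop :=
  ∃ Z : Set ℕ, Comp Z ∧ X ⊆ Z ∧ Y ∩ Z = ∅

/-- Computable inseparability. -/
def CompInseparable (X Y : Set ℕ) : Prop := ¬ CompSeparable X Y

/-- `Z` and `W` weakly biseparate `X` and `Y`. -/
def WeaklyBiseparate {α : Type*} (Z W X Y : Set α) : Prop :=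
  X ⊆ Z ∧ Y ⊆ W ∧ Z ∩ Y = ∅ ∧ W ∩ X = ∅

/-- `Z` and `W` biseparate `X` and `Y`. -/
def Biseparate {α : Type*} (Z W X Y : Set α) : Prop :=
  WeaklyBiseparate Z W X Y ∧ Z ∩ W = ∅

/-! ## Logical notions -/

variable {L : FirstOrder.Language}

/-- Provability: `φ` is a first-order consequence of `U` (by Gödel completeness,
semantic consequence). -/
def Prv (U : L.Theory) (φ : L.Sentence) : Prop := U ⊨ᵇ φ

/-- `U_p`: the set of theorems of `U`. -/
def Thms (U : L.Theory) : Set L.Sentence := {φ | Prv U φ}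

/-- `U_r`: the set of refutable sentences of `U`. -/
def Refut (U : L.Theory) : Set L.Sentence := {φ | Prv U ∼φ}

/-- Consistency: `U ⊬ ⊥`. -/
def Consistent (U : L.Theory) : Prop := ¬ Prv U ⊥

/-- `φ` is independent of `U`: `U` proves neither `φ` nor `¬φ`. -/
def Independent (U : L.Theory) (φ : L.Sentence) : Prop := ¬ Prv U φ ∧ ¬ Prv U ∼φ

/-- `U` is incomplete: some sentence is independent of it. -/
def Incomplete (U : L.Theory) : Prop := ∃ φ, Independent U φ

/-- Mono-consequence: `U ⊢_m φ` iff `ψ ⊢ φ` for some `ψ ∈ U`. -/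
def MPrv (U : L.Theory) (φ : L.Sentence) : Prop := ∃ ψ ∈ U, Prv {ψ} φ

/-- `U_m`: the set of mono-theorems of `U`. -/
def MThms (U : L.Theory) : Set L.Sentence := {φ | MPrv U φ}

/-- `U_n`: the set of mono-refutable sentences of `U`. -/
def MRefut (U : L.Theory) : Set L.Sentence := {φ | MPrv U ∼φ}

/-- Mono-consistency: every member is consistent by itself. -/
def MonoConsistent (U : L.Theory) : Prop := ∀ ψ ∈ U, Consistent ({ψ} : L.Theory)

/-- `Û`: the set of all non-empty finite conjunctions of elements of `U`. -/
def hat (U : L.Theory) : L.Theory :=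
  {φ | ∃ (ψ : L.Sentence) (l : List L.Sentence),
    ψ ∈ U ∧ (∀ χ ∈ l, χ ∈ U) ∧ φ = l.foldl (· ⊓ ·) ψ}

/-- `U ⋓ V`. -/
def Cup (U V : L.Theory) : L.Theory :=
  {χ | ∃ φ ∈ U, ∃ ψ ∈ V, χ = φ ⊓ ψ}

/-- `U ⋐ V`: for every `φ ∈ U` and `ψ ∈ V` there is `ρ ∈ V` with `ρ ⊢ φ ∧ ψ`. -/
def Ssub (U V : L.Theory) : Prop :=
  ∀ φ ∈ U, ∀ ψ ∈ V, ∃ ρ ∈ V, Prv {ρ} (φ ⊓ ψ)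

/-! ## Gödel numbering -/

/-- A Gödel numbering of the sentences of a (countable) signature: a bijective
coding of sentences by natural numbers that is effective for the basic syntactic
operations, and for which the theorems of a c.e. theory can be effectively
enumerated from an index of the theory. -/
structure Numbering (L : FirstOrder.Language) where
  equiv : L.Sentence ≃ ℕ
  neg_comp : Computable fun n => equiv ∼(equiv.symm n)
  inf_comp : Computable₂ fun m n => equiv (equiv.symm m ⊓ equiv.symm n)
  imp_comp : Computable₂ fun m n => equiv (equiv.symm m ⟹ equiv.symm n)
  iff_comp : Computable₂ fun m n => equiv (equiv.symm m ⇔ equiv.symm n)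
  thmIdx : ℕ → ℕ
  thmIdx_comp : Computable thmIdx
  thmIdx_spec : ∀ i, WSet (thmIdx i) = equiv '' Thms (equiv.symm '' WSet i)

namespace Numbering

variable (g : Numbering L)

/-- The code of a sentence. -/
def code (φ : L.Sentence) : ℕ := g.equiv φ

/-- The set of codes of a set of sentences. -/
def codes (S : Set L.Sentence) : Set ℕ := g.equiv '' S

/-- The theory axiomatised by the `i`-th c.e. set (identified with a set of
sentences via the numbering). -/
def thy (i : ℕ) : L.Theory := g.equiv.symm '' WSet i

/-- The theory `U` is computably enumerable (with respect to the numbering). -/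
def CEThy (U : L.Theory) : Prop := CE (g.codes U)

end Numbering


/-- `U` is effectively ef-essentially `F`-incomplete: a total computable function
on (codes of) sentences produces, for each `φ` consistent with `U`, a sentence
independent of `U ∪ {φ}` lying in `F (U ∪ {φ})`. -/
def EffEfEssIncomplete (g : Numbering L) (U : L.Theory)
    (F : Set L.Sentence → Set L.Sentence) : Prop :=
  ∃ Φ : ℕ → ℕ, Computable Φ ∧ ∀ φ : L.Sentence,
    Consistent (U ∪ {φ}) →
    Independent (U ∪ {φ}) (g.equiv.symm (Φ (g.code φ))) ∧
    g.equiv.symm (Φ (g.code φ)) ∈ F (U ∪ {φ})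

theorem prv_iff'.{u, v} {L : FirstOrder.Language.{u, v}} (T : L.Theory) (φ : L.Sentence) :
    Prv T φ ↔ ∀ M : FirstOrder.Language.Theory.ModelType.{u, v, max u v} T, M ⊨ φ :=
  FirstOrder.Language.Theory.models_sentence_iff

theorem consistent_iff' {L : FirstOrder.Language} (T : L.Theory) :
    Consistent T ↔ T.IsSatisfiable := by
  unfold Consistent
  rw [prv_iff']
  constructor
  · intro h
    push Not at h
    obtain ⟨M, _⟩ := h
    exact ⟨M⟩
  · rintro ⟨M⟩ h
    exact h M

theorem prv_models {L : FirstOrder.Language} (T : L.Theory) (φ : L.Sentence) :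
    Prv T φ ↔ ¬ (T ∪ {∼φ}).IsSatisfiable :=
  FirstOrder.Language.Theory.models_iff_not_satisfiable φ

theorem consistent_imp {L : FirstOrder.Language} (U : L.Theory) (hcon : Consistent U)
    (φ χ : L.Sentence) (h : Consistent (U ∪ {φ}) → ¬ Prv (U ∪ {φ}) ∼χ) :
    Consistent (U ∪ {φ ⟹ χ}) := by
  rw [consistent_iff'] at *
  by_cases hc : (U ∪ {φ}).IsSatisfiable
  · have h2 := h hc
    rw [prv_iff'] at h2
    push Not at h2
    obtain ⟨M, hM⟩ := h2
    have hM1 : M ⊨ U ∪ {φ} := M.is_model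
    rw [Sentence.realize_not, not_not] at hM
    have : M ⊨ U ∪ {φ ⟹ χ} := by
      rw [Theory.model_iff] at *
      rintro ψ (hψ | rfl)
      · exact hM1 ψ (Or.inl hψ)
      · exact fun _ => hM
    exact Theory.Model.isSatisfiable M
  · obtain ⟨M⟩ := hcon
    have hM1 : M ⊨ U := M.is_model
    have : M ⊨ U ∪ {φ ⟹ χ} := by
      rw [Theory.model_iff] at *
      rintro ψ (hψ | rfl)
      · exact hM1 ψ hψ
      · intro hφ
        exfalso
        apply hc
        have : M ⊨ U ∪ {φ} := by
          rw [Theory.model_iff]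
          rintro ψ (hψ | rfl)
          · exact hM1 ψ hψ
          · exact hφ
        exact Theory.Model.isSatisfiable M
    exact Theory.Model.isSatisfiable M

theorem independent_imp.{u, v} {L : FirstOrder.Language.{u, v}} (U : L.Theory)
    (φ χ : L.Sentence) (h : Independent (U ∪ {φ}) χ) :
    Independent (U ∪ {φ}) (φ ⟹ χ) := by
  unfold Independent at *
  simp only [prv_iff'] at *
  have key : ∀ M : Theory.ModelType.{u, v, max u v} (U ∪ {φ}), M ⊨ (φ ⟹ χ) ↔ M ⊨ χ := by
    intro M
    have hφ : M ⊨ φ := (Theory.model_iff _).1 M.is_model φ (Or.inr rfl)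
    exact ⟨fun h => h hφ, fun h _ => h⟩
  refine ⟨fun h1 => h.1 fun M => (key M).1 (h1 M), fun h1 => h.2 fun M => ?_⟩
  have := h1 M
  rw [Sentence.realize_not] at *
  exact fun h3 => this ((key M).2 h3)

theorem ce_range (f : ℕ → ℕ) (hf : Computable f) : CE (Set.range f) := by
  have hp : Partrec fun n : ℕ => Nat.rfind fun m => (Part.some (decide (f m = n)) : Part Bool) := by
    apply Partrec.rfind
    have : Computable₂ fun n m : ℕ => decide (f m = n) :=
      (Primrec.eq (α := ℕ)).decide.to_comp.comp (hf.comp Computable.snd) Computable.fst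
    exact this.partrec₂
  obtain ⟨c, hc⟩ := Nat.Partrec.Code.exists_code.1 (Partrec.nat_iff.1 hp)
  refine ⟨Encodable.encode c, ?_⟩
  ext n
  change _ ↔ ((Denumerable.ofNat Nat.Partrec.Code (Encodable.encode c)).eval n).Dom
  rw [Denumerable.ofNat_encode, hc]
  refine Iff.trans ?_ Nat.rfind_dom.symm
  constructor
  · rintro ⟨m, hm⟩
    exact ⟨m, Part.mem_some_iff.2 (by simp [hm]), fun _ => trivial⟩
  · rintro ⟨m, hm, _⟩
    exact ⟨m, by simpa using (Part.mem_some_iff.1 hm).symm⟩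

/-- If `U` is a consistent, effectively ef-essentially
incomplete c.e. theory, then there is a c.e. set `X` of sentences such that `U`
is effectively ef-essentially `X`-incomplete and every `φ ∈ X` is consistent
with `U` (in other words, `U_p ∪ X` is mono-consistent). -/
theorem statement14 {L : FirstOrder.Language} (g : Numbering L) (U : L.Theory)
    (hU : g.CEThy U) (hcon : Consistent U)
    (h : EffEfEssIncomplete g U (fun _ => (Set.univ : Set L.Sentence))) :
    ∃ X : Set L.Sentence, CE (g.codes X) ∧
      EffEfEssIncomplete g U (fun _ => X) ∧
      (∀ φ ∈ X, Consistent (U ∪ {φ})) ∧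
      MonoConsistent (Thms U ∪ X) := by
  obtain ⟨Φ, hΦ, hind⟩ := h
  let Ψ : ℕ → ℕ := fun n => g.equiv (g.equiv.symm n ⟹ g.equiv.symm (Φ n))
  have hΨ : Computable Ψ := g.imp_comp.comp Computable.id hΦ
  have hX : ∀ φ ∈ Set.range (fun n => g.equiv.symm (Ψ n)), Consistent (U ∪ {φ}) := by
    rintro _ ⟨n, rfl⟩
    simp only [Ψ, Equiv.symm_apply_apply]
    apply consistent_imp U hcon
    intro hc
    have := (hind _ hc).1.2
    simpa [Numbering.code] using this
  refine ⟨Set.range (fun n => g.equiv.symm (Ψ n)), ?_, ⟨Ψ, hΨ, ?_⟩, hX, ?_⟩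
  · have : g.codes (Set.range (fun n => g.equiv.symm (Ψ n))) = Set.range Ψ := by
      ext k
      simp [Numbering.codes]
    rw [this]
    exact ce_range Ψ hΨ
  · intro φ hc
    refine ⟨?_, ⟨_, rfl⟩⟩
    simp only [Ψ, Equiv.symm_apply_apply, Numbering.code]
    exact independent_imp U _ _ (hind φ hc).1
  · have mono : ∀ {S T : L.Theory}, S ⊆ T → Consistent T → Consistent S := by
      intro S T hST hT
      rw [consistent_iff'] at *
      exact hT.mono hST
    rintro ψ (hψ | hψ)
    · rw [consistent_iff'] at *
      obtain ⟨M⟩ := hcon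
      have hm : M ⊨ ψ := (prv_iff' U ψ).1 hψ M
      have : M ⊨ ({ψ} : L.Theory) := by
        rw [Theory.model_iff]
        rintro _ rfl
        exact hm
      exact Theory.Model.isSatisfiable M
    · exact mono Set.subset_union_right (hX ψ hψ)

end PourEl
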